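/- Let e : (0,∞) → ℝ be a Synge-type EOS, d = 1, and σ ∈ ℝ. Let L ≥ 2 and ω_1,…,ω_L > 0 with ω_1 + ⋯ + ω_L = 1. For ℓ ∈ {1,…,L}, let (ρ^ℓ, v^ℓ, θ^ℓ) be primitive states, each satisfying ρ^ℓ > 0, θ^ℓ > 0, |v^ℓ| < 1, −ln ρ^ℓ + Z(θ^ℓ) ≥ σ, with conservative vectors Ũ^ℓ = U(ρ^ℓ,v^ℓ,θ^ℓ) and fluxes F̃^ℓ = F_1(ρ^ℓ,v^ℓ,θ^ℓ), and set Ū = Σ_ℓ ω_ℓ Ũ^ℓ. Let (ρ^a, v^a, θ^a) and (ρ^b, v^b, θ^b) be two further primitive states satisfying the same constraints (entropy at least σ), representing the right endpoint value of the left neighbor cell and the left endpoint value of the right neighbor cell, with conservative vectors Ũ^a, Ũ^b and fluxes F̃^a, F̃^b. Let 0 < λ ≤ min(ω_1, ω_L) and define F̂(U,U',F,F') = ½(F + F' + U − U'). Then Ū⁺ := Ū − λ·(F̂(Ũ^L, Ũ^b, F̃^L, F̃^b) − F̂(Ũ^a, Ũ^1, F̃^a, F̃^1)) ∈ Ω_σ.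 -/

import Mathlib

/-!
The proof describes `Ω_σ` by affine inequalities. For a temperature `τ > 0` put
`p* = τ exp (Z τ - σ)`, the pressure at entropy exactly `σ`, and encode a velocity `w` by
`y = γ(w)(1 + w) > 0`. A physical vector `(D, m, E)` has entropy at least `σ` iff
`(E - m) y² + (E + m) - 2 y h(τ) D + p* (y² + 1) ≥ 0` for all `τ, y > 0`: testing with its own
temperature and velocity returns exactly the entropy bound.

For a single admissible state, `U + F` satisfies this inequality with the extra term
`p* (y² - 1)` on the left, and `U - F` with the extra term `-p* (y² - 1)`. After completing a
square this is `h(τ)² ≤ (1 + e θ)² - θ² + 2 h(θ) τ exp (Z τ - Z θ)` (`key_ineq`). There is equality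
at `θ = τ`, and the `θ`-derivative of the right-hand side is
`2 ((1 + e) e' - θ) (1 - τ exp (Z τ - Z θ) / θ)`, whose sign is that of `θ - τ` by the hypothesis
on `e'` and the monotonicity of `Z`. The Lax–Friedrichs update is a nonnegative combination of
vectors `U` and `U ± F` in which the `+` and `-` have equal total weight, so the extra terms cancel.

It remains that the update is physical at all. This uses the cones `(h(η) D)² + m² ≤ E²`: each
`U ± F` lies in them for all small `η > 0`, since `(1 + e)² - θ²` is strictly increasing, and
conversely a vector with `D > 0` in such a cone has primitive variables by the intermediate value
theorem in `θ` (`recover`). `Adm` bundles both kinds of condition.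
-/

open scoped BigOperators

noncomputable section

/-- `Z(θ) = ∫₁^θ e'(ξ)/ξ dξ`. -/
def Zfun (e : ℝ → ℝ) (θ : ℝ) : ℝ := ∫ ξ in (1:ℝ)..θ, deriv e ξ / ξ

/-- Specific enthalpy `h(θ) = 1 + θ + e(θ)`. -/
def hfun (e : ℝ → ℝ) (θ : ℝ) : ℝ := 1 + θ + e θ

/-- Lorentz factor `γ = (1 − v²)^{−1/2}` for a scalar velocity. -/
def gam1 (v : ℝ) : ℝ := 1 / Real.sqrt (1 - v ^ 2)

/-- Conservative vector `U(ρ,v,θ) = (ργ, ρh(θ)γ²v, ρh(θ)γ² − p) ∈ ℝ³` with `p = ρθ` (d = 1). -/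
def U1 (e : ℝ → ℝ) (ρ v θ : ℝ) : ℝ × ℝ × ℝ :=
  (ρ * gam1 v, ρ * hfun e θ * (gam1 v) ^ 2 * v, ρ * hfun e θ * (gam1 v) ^ 2 - ρ * θ)

/-- Flux `F₁(ρ,v,θ) = (ργv, ρh(θ)γ²v² + p, ρh(θ)γ²v) ∈ ℝ³` with `p = ρθ` (d = 1). -/
def F1s (e : ℝ → ℝ) (ρ v θ : ℝ) : ℝ × ℝ × ℝ :=
  (ρ * gam1 v * v, ρ * hfun e θ * (gam1 v) ^ 2 * v ^ 2 + ρ * θ,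
   ρ * hfun e θ * (gam1 v) ^ 2 * v)

/-- The admissible set `Ω_σ ⊆ ℝ³` (d = 1). -/
def Omega1 (e : ℝ → ℝ) (σ : ℝ) : Set (ℝ × ℝ × ℝ) :=
  { u | ∃ ρ v θ : ℝ, 0 < ρ ∧ 0 < θ ∧ |v| < 1 ∧
        σ ≤ -Real.log ρ + Zfun e θ ∧ u = U1 e ρ v θ }

/-- Lax–Friedrichs numerical flux with wave-speed bound `α = 1`:
`F̂(U,U',F,F') = ½(F + F' + U − U')`. -/
def LFflux (U U' F F' : ℝ × ℝ × ℝ) : ℝ × ℝ × ℝ := ((1:ℝ) / 2) • (F + F' + U - U')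

open scoped BigOperators

open Set Filter Topology

/-! ### The equation of state -/

section EOS

variable {e : ℝ → ℝ}

lemma deriv_e_pos
    (hpos : ∀ ξ : ℝ, 0 < ξ → 0 < e ξ)
    (hineq : ∀ ξ : ℝ, 0 < ξ → ξ / (e ξ + 1) < deriv e ξ)
    {ξ : ℝ} (h : 0 < ξ) : 0 < deriv e ξ :=
  (div_pos h (by linarith [hpos ξ h])).trans (hineq ξ h)

lemma lt_mul_deriv
    (hpos : ∀ ξ : ℝ, 0 < ξ → 0 < e ξ)
    (hineq : ∀ ξ : ℝ, 0 < ξ → ξ / (e ξ + 1) < deriv e ξ)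
    {ξ : ℝ} (h : 0 < ξ) : ξ < (1 + e ξ) * deriv e ξ := by
  have h1 := hineq ξ h
  rw [div_lt_iff₀ (by linarith [hpos ξ h])] at h1
  linarith

lemma e_strictMono
    (hdiff : ∀ ξ : ℝ, 0 < ξ → DifferentiableAt ℝ e ξ)
    (hpos : ∀ ξ : ℝ, 0 < ξ → 0 < e ξ)
    (hineq : ∀ ξ : ℝ, 0 < ξ → ξ / (e ξ + 1) < deriv e ξ) :
    StrictMonoOn e (Ioi 0) := by
  apply strictMonoOn_of_deriv_pos (convex_Ioi 0)
  · exact fun x hx => (hdiff x hx).continuousAt.continuousWithinAt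
  · intro x hx
    rw [interior_Ioi] at hx
    exact deriv_e_pos hpos hineq hx

lemma sq_sub_strictMono
    (hdiff : ∀ ξ : ℝ, 0 < ξ → DifferentiableAt ℝ e ξ)
    (hpos : ∀ ξ : ℝ, 0 < ξ → 0 < e ξ)
    (hineq : ∀ ξ : ℝ, 0 < ξ → ξ / (e ξ + 1) < deriv e ξ) :
    StrictMonoOn (fun ξ => (1 + e ξ) ^ 2 - ξ ^ 2) (Ioi 0) := by
  have hd : ∀ x : ℝ, 0 < x → HasDerivAt (fun ξ => (1 + e ξ) ^ 2 - ξ ^ 2)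
      (2 * ((1 + e x) * deriv e x - x)) x := by
    intro x hx
    have h1 := (((hdiff x hx).hasDerivAt.const_add 1).pow 2).sub ((hasDerivAt_id x).pow 2)
    refine h1.congr_deriv ?_
    simp
    ring
  apply strictMonoOn_of_deriv_pos (convex_Ioi 0)
  · exact fun x hx => (hd x hx).continuousAt.continuousWithinAt
  · intro x hx
    rw [interior_Ioi] at hx
    rw [(hd x hx).deriv]
    linarith [lt_mul_deriv hpos hineq hx]

/-- The gap between `h η` and `1 + e η` vanishes as `η → 0`, so strict monotonicity of
`(1 + e)² - ξ²` leaves room for `h η ^ 2`. -/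
lemma eventually_h_sq
    (hdiff : ∀ ξ : ℝ, 0 < ξ → DifferentiableAt ℝ e ξ)
    (hpos : ∀ ξ : ℝ, 0 < ξ → 0 < e ξ)
    (hineq : ∀ ξ : ℝ, 0 < ξ → ξ / (e ξ + 1) < deriv e ξ)
    {θ : ℝ} (hθ : 0 < θ) :
    ∀ᶠ η in 𝓝[>] (0:ℝ), hfun e η ^ 2 ≤ (1 + e θ) ^ 2 - θ ^ 2 := by
  have hG : (1 + e (θ / 2)) ^ 2 - (θ / 2) ^ 2 < (1 + e θ) ^ 2 - θ ^ 2 :=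
    sq_sub_strictMono hdiff hpos hineq (show 0 < θ / 2 by linarith) (show 0 < θ from hθ)
      (by linarith)
  have hc : ContinuousAt (fun η : ℝ => (1 + e (θ / 2)) ^ 2 - (θ / 2) ^ 2
      + 2 * (1 + e (θ / 2)) * η + 2 * η ^ 2) 0 := by fun_prop
  have h1 : ∀ᶠ η in 𝓝[>] (0:ℝ), (1 + e (θ / 2)) ^ 2 - (θ / 2) ^ 2
      + 2 * (1 + e (θ / 2)) * η + 2 * η ^ 2 < (1 + e θ) ^ 2 - θ ^ 2 := by
    apply nhdsWithin_le_nhds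
    apply hc.eventually_lt continuousAt_const
    simpa using hG
  have h2 : ∀ᶠ η in 𝓝[>] (0:ℝ), η < θ / 2 :=
    nhdsWithin_le_nhds (eventually_lt_nhds (by linarith))
  filter_upwards [h1, h2, self_mem_nhdsWithin] with η h1 h2 h3
  have h3 : 0 < η := h3
  have h4 := sq_sub_strictMono hdiff hpos hineq (show 0 < η from h3)
    (show 0 < θ / 2 by linarith) h2
  have h5 := e_strictMono hdiff hpos hineq (show 0 < η from h3) (show 0 < θ / 2 by linarith) h2
  beta_reduce at h4
  have h6 : e η * η ≤ e (θ / 2) * η := by gcongr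
  unfold hfun
  nlinarith

lemma lt_one_add_e
    (hdiff : ∀ ξ : ℝ, 0 < ξ → DifferentiableAt ℝ e ξ)
    (hpos : ∀ ξ : ℝ, 0 < ξ → 0 < e ξ)
    (hineq : ∀ ξ : ℝ, 0 < ξ → ξ / (e ξ + 1) < deriv e ξ)
    {θ : ℝ} (hθ : 0 < θ) : θ < 1 + e θ := by
  obtain ⟨η, h1, h2⟩ := ((eventually_h_sq hdiff hpos hineq hθ).and self_mem_nhdsWithin).exists
  have h0 := hpos θ hθ
  have h3 : θ ^ 2 ≤ (1 + e θ) ^ 2 := by nlinarith [sq_nonneg (hfun e η)]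
  have h4 : 0 < hfun e η := by
    have := hpos η h2
    have h2 : 0 < η := h2
    unfold hfun; linarith
  apply lt_of_pow_lt_pow_left₀ 2 (by linarith)
  nlinarith

/-- `e'` need not be continuous, so the fundamental theorem of calculus is applied to
`Q ξ = e ξ / ξ + ∫₁^ξ e t / t²`, which has derivative `e' ξ / ξ` at every `ξ > 0`;
integrability of `e' ξ / ξ` comes from its sign. -/
lemma hasDerivAt_Z
    (hdiff : ∀ ξ : ℝ, 0 < ξ → DifferentiableAt ℝ e ξ)
    (hpos : ∀ ξ : ℝ, 0 < ξ → 0 < e ξ)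
    (hineq : ∀ ξ : ℝ, 0 < ξ → ξ / (e ξ + 1) < deriv e ξ)
    {θ : ℝ} (hθ : 0 < θ) : HasDerivAt (Zfun e) (deriv e θ / θ) θ := by
  set Q : ℝ → ℝ := fun ξ => e ξ / ξ + ∫ t in (1:ℝ)..ξ, e t / t ^ 2 with hQ
  have hcont : ContinuousOn (fun t => e t / t ^ 2) (Ioi 0) := by
    apply ContinuousOn.div
    · exact fun x hx => (hdiff x hx).continuousAt.continuousWithinAt
    · fun_prop
    · intro x hx
      have hx : 0 < x := hx
      positivity
  have hsub : ∀ x : ℝ, 0 < x → uIcc 1 x ⊆ Ioi 0 := fun x hx y hy =>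
    lt_of_lt_of_le (lt_min one_pos hx) hy.1
  have hQd : ∀ x : ℝ, 0 < x → HasDerivAt Q (deriv e x / x) x := by
    intro x hx
    have hI : IntervalIntegrable (fun t => e t / t ^ 2) MeasureTheory.volume 1 x :=
      (hcont.mono (hsub x hx)).intervalIntegrable
    have h1 := intervalIntegral.integral_hasDerivAt_right hI
      (hcont.stronglyMeasurableAtFilter isOpen_Ioi x hx)
      (hcont.continuousAt (Ioi_mem_nhds hx))
    have h2 := ((hdiff x hx).hasDerivAt.div (hasDerivAt_id x) hx.ne').add h1
    refine h2.congr_deriv ?_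
    simp only [id]
    field_simp
    ring
  have hZ : ∀ x : ℝ, 0 < x → Zfun e x = Q x - Q 1 := by
    intro x hx
    unfold Zfun
    apply intervalIntegral.integral_eq_sub_of_hasDerivAt
    · exact fun y hy => hQd y (hsub x hx hy)
    · apply intervalIntegral.intervalIntegrable_deriv_of_nonneg (g := Q)
      · exact fun y hy => (hQd y (hsub x hx hy)).continuousAt.continuousWithinAt
      · intro y hy
        exact hQd y (lt_trans (lt_min one_pos hx) hy.1)
      · intro y hy
        have hy : 0 < y := lt_trans (lt_min one_pos hx) hy.1
        exact (div_pos (deriv_e_pos hpos hineq hy) hy).le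
  have h3 := (hQd θ hθ).sub_const (Q 1)
  apply h3.congr_of_eventuallyEq
  filter_upwards [Ioi_mem_nhds hθ] with x hx using hZ x hx

lemma Z_mono
    (hdiff : ∀ ξ : ℝ, 0 < ξ → DifferentiableAt ℝ e ξ)
    (hpos : ∀ ξ : ℝ, 0 < ξ → 0 < e ξ)
    (hineq : ∀ ξ : ℝ, 0 < ξ → ξ / (e ξ + 1) < deriv e ξ) :
    MonotoneOn (Zfun e) (Ioi 0) := by
  apply monotoneOn_of_deriv_nonneg (convex_Ioi 0)
  · exact fun x hx => (hasDerivAt_Z hdiff hpos hineq hx).continuousAt.continuousWithinAt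
  · intro x hx
    rw [interior_Ioi] at hx
    exact (hasDerivAt_Z hdiff hpos hineq hx).differentiableAt.differentiableWithinAt
  · intro x hx
    rw [interior_Ioi] at hx
    rw [(hasDerivAt_Z hdiff hpos hineq hx).deriv]
    exact (div_pos (deriv_e_pos hpos hineq hx) hx).le

/-- Thermodynamic inequality behind the flux-splitting estimate: the right-hand side, as a
function of `θ`, decreases up to `τ`, increases afterwards, and equals the left-hand side
at `θ = τ`. -/
lemma key_ineq
    (hdiff : ∀ ξ : ℝ, 0 < ξ → DifferentiableAt ℝ e ξ)
    (hpos : ∀ ξ : ℝ, 0 < ξ → 0 < e ξ)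
    (hineq : ∀ ξ : ℝ, 0 < ξ → ξ / (e ξ + 1) < deriv e ξ)
    {θ τ : ℝ} (hθ : 0 < θ) (hτ : 0 < τ) :
    hfun e τ ^ 2 ≤ (1 + e θ) ^ 2 - θ ^ 2
      + 2 * (hfun e θ * (τ * Real.exp (Zfun e τ - Zfun e θ))) := by
  set g : ℝ → ℝ := fun x => (1 + e x) ^ 2 - x ^ 2
      + 2 * ((1 + x + e x) * (τ * Real.exp (Zfun e τ - Zfun e x))) with hg
  have hgτ : g τ = hfun e τ ^ 2 := by
    simp only [hg, hfun, sub_self, Real.exp_zero]; ring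
  have hd : ∀ x : ℝ, 0 < x → HasDerivAt g
      (2 * ((1 + e x) * deriv e x - x) * (1 - τ * Real.exp (Zfun e τ - Zfun e x) / x)) x := by
    intro x hx
    have he := (hdiff x hx).hasDerivAt
    have hZ := hasDerivAt_Z hdiff hpos hineq hx
    have h1 := (((he.const_add 1).pow 2).sub ((hasDerivAt_id x).pow 2)).add
      (((((hasDerivAt_id x).const_add 1).add he).mul
        ((hZ.const_sub (Zfun e τ)).exp.const_mul τ)).const_mul 2)
    refine h1.congr_deriv ?_
    simp
    field_simp
    ring
  rw [← hgτ]
  change g τ ≤ g θ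
  rcases le_total τ θ with h | h
  · have hm : MonotoneOn g (Ici τ) := by
      apply monotoneOn_of_deriv_nonneg (convex_Ici τ)
      · exact fun x hx => (hd x (hτ.trans_le hx)).continuousAt.continuousWithinAt
      · intro x hx
        rw [interior_Ici] at hx
        exact (hd x (hτ.trans hx)).differentiableAt.differentiableWithinAt
      · intro x hx
        rw [interior_Ici] at hx
        have hx' : τ < x := hx
        have hx0 := hτ.trans hx'
        rw [(hd x hx0).deriv]
        have hZ := Z_mono hdiff hpos hineq (show 0 < τ from hτ) (show 0 < x from hx0) hx'.le
        have hexp : Real.exp (Zfun e τ - Zfun e x) ≤ 1 := Real.exp_le_one_iff.2 (by linarith)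
        have h3 : τ * Real.exp (Zfun e τ - Zfun e x) / x ≤ 1 := by
          rw [div_le_one hx0]
          nlinarith
        have := lt_mul_deriv hpos hineq hx0
        exact mul_nonneg (by linarith) (by linarith)
    exact hm self_mem_Ici h h
  · have hm : AntitoneOn g (Ioc 0 τ) := by
      apply antitoneOn_of_deriv_nonpos (convex_Ioc 0 τ)
      · exact fun x hx => (hd x hx.1).continuousAt.continuousWithinAt
      · intro x hx
        exact (hd x (interior_subset hx).1).differentiableAt.differentiableWithinAt
      · intro x hx
        obtain ⟨hx0, hx'⟩ := interior_subset hx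
        rw [(hd x hx0).deriv]
        have hZ := Z_mono hdiff hpos hineq (show 0 < x from hx0) (show 0 < τ from hτ) hx'
        have hexp : 1 ≤ Real.exp (Zfun e τ - Zfun e x) := Real.one_le_exp_iff.2 (by linarith)
        have h3 : 1 ≤ τ * Real.exp (Zfun e τ - Zfun e x) / x := by
          rw [one_le_div hx0]
          nlinarith
        have := lt_mul_deriv hpos hineq hx0
        exact mul_nonpos_of_nonneg_of_nonpos (by linarith) (by linarith)
    exact hm ⟨hθ, h⟩ ⟨hτ, le_rfl⟩ h

end EOS

/-! ### A convex cone of weighted conservative vectors -/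

/-- The convex cone of triples `(X, w, s)`, with `X = (D, m, E)`, cut out by
`D ≥ 0`, `E ≥ 0`, the cones `(h(η) D)² + m² ≤ E²` for all small `η > 0`, and the family of linear
inequalities indexed by a temperature `τ` and a velocity, the latter encoded by
`y = γ(1 + v) > 0`. The weight `w` counts state vectors and `s` counts flux vectors, so that
`(U, 1, 0)` and `(U ± F, 1, ±1)` belong to the cone. -/
def Adm (e : ℝ → ℝ) (σ : ℝ) (X : ℝ × ℝ × ℝ) (w s : ℝ) : Prop :=
  0 ≤ X.1 ∧ 0 ≤ X.2.2 ∧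
  (∀ᶠ η in 𝓝[>] (0:ℝ), (hfun e η * X.1) ^ 2 + X.2.1 ^ 2 ≤ X.2.2 ^ 2) ∧
  ∀ y τ : ℝ, 0 < y → 0 < τ →
    0 ≤ (X.2.2 - X.2.1) * y ^ 2 + (X.2.2 + X.2.1) - 2 * y * hfun e τ * X.1
      + w * (τ * Real.exp (Zfun e τ - σ)) * (y ^ 2 + 1)
      + s * (τ * Real.exp (Zfun e τ - σ)) * (y ^ 2 - 1)

lemma cone_add {a b E a' b' E' : ℝ} (hE : 0 ≤ E) (hE' : 0 ≤ E')
    (h : a ^ 2 + b ^ 2 ≤ E ^ 2) (h' : a' ^ 2 + b' ^ 2 ≤ E' ^ 2) :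
    (a + a') ^ 2 + (b + b') ^ 2 ≤ (E + E') ^ 2 := by
  have h1 : (a * a' + b * b') ^ 2 ≤ (E * E') ^ 2 := by
    have h2 : (a ^ 2 + b ^ 2) * (a' ^ 2 + b' ^ 2) ≤ E ^ 2 * E' ^ 2 := by gcongr
    nlinarith [sq_nonneg (a * b' - b * a')]
  have h3 := abs_le_of_sq_le_sq' h1 (by positivity)
  nlinarith [h3.2]

section Cone

variable {e : ℝ → ℝ} {σ : ℝ}

lemma Adm.add {X Y : ℝ × ℝ × ℝ} {w s w' s' : ℝ} (hX : Adm e σ X w s) (hY : Adm e σ Y w' s') :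
    Adm e σ (X + Y) (w + w') (s + s') := by
  obtain ⟨a1, a2, a3, a4⟩ := hX
  obtain ⟨b1, b2, b3, b4⟩ := hY
  refine ⟨add_nonneg a1 b1, add_nonneg a2 b2, ?_, ?_⟩
  · filter_upwards [a3, b3] with η h1 h2
    have := cone_add a2 b2 h1 h2
    simpa [mul_add] using this
  · intro y τ hy hτ
    have h1 := a4 y τ hy hτ
    have h2 := b4 y τ hy hτ
    simp only [Prod.fst_add, Prod.snd_add]
    linarith

lemma Adm.smul {X : ℝ × ℝ × ℝ} {w s c : ℝ} (hc : 0 ≤ c) (hX : Adm e σ X w s) :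
    Adm e σ (c • X) (c * w) (c * s) := by
  obtain ⟨a1, a2, a3, a4⟩ := hX
  refine ⟨mul_nonneg hc a1, mul_nonneg hc a2, ?_, ?_⟩
  · filter_upwards [a3] with η h1
    have := mul_le_mul_of_nonneg_left h1 (sq_nonneg c)
    simp only [Prod.smul_fst, Prod.smul_snd, smul_eq_mul]
    linarith
  · intro y τ hy hτ
    have h1 := mul_nonneg hc (a4 y τ hy hτ)
    simp only [Prod.smul_fst, Prod.smul_snd, smul_eq_mul]
    linarith

lemma Adm.zero : Adm e σ 0 0 0 := by
  simp [Adm]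

lemma Adm.sum {ι : Type*} (t : Finset ι) (X : ι → ℝ × ℝ × ℝ) (w s : ι → ℝ)
    (h : ∀ i ∈ t, Adm e σ (X i) (w i) (s i)) :
    Adm e σ (∑ i ∈ t, X i) (∑ i ∈ t, w i) (∑ i ∈ t, s i) := by
  classical
  induction t using Finset.induction_on with
  | empty => simpa using Adm.zero
  | insert a t ha ih =>
    simp only [Finset.sum_insert ha]
    exact (h a (by simp)).add (ih fun i hi => h i (by simp [hi]))

/-- Reflection of space, which replaces `y = γ(1 + v)` by `1 / y`. -/
lemma Adm.reflect {X : ℝ × ℝ × ℝ} {w s : ℝ} (hX : Adm e σ X w s) :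
    Adm e σ (X.1, -X.2.1, X.2.2) w (-s) := by
  obtain ⟨a1, a2, a3, a4⟩ := hX
  refine ⟨a1, a2, ?_, ?_⟩
  · filter_upwards [a3] with η h1
    simpa using h1
  · intro y τ hy hτ
    have h1 := mul_nonneg (sq_nonneg y) (a4 y⁻¹ τ (inv_pos.2 hy) hτ)
    refine h1.trans_eq ?_
    field_simp
    ring

end Cone

/-! ### States and fluxes -/

lemma gam1_pos {v : ℝ} (hv : |v| < 1) : 0 < gam1 v := by
  have := (sq_lt_one_iff_abs_lt_one v).2 hv
  unfold gam1
  have : 0 < 1 - v ^ 2 := by linarith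
  positivity

lemma gam1_sq {v : ℝ} (hv : |v| < 1) : gam1 v ^ 2 * (1 - v ^ 2) = 1 := by
  have := (sq_lt_one_iff_abs_lt_one v).2 hv
  have h : 0 < 1 - v ^ 2 := by linarith
  unfold gam1
  rw [div_pow, Real.sq_sqrt h.le]
  field_simp

section States

variable {e : ℝ → ℝ} {σ : ℝ}

lemma hfun_pos
    (hpos : ∀ ξ : ℝ, 0 < ξ → 0 < e ξ)
    {θ : ℝ} (hθ : 0 < θ) : 0 < hfun e θ := by
  have := hpos θ hθ
  unfold hfun; linarith

/-- With `x = γ(1 + v)`, the vector `U + F` has `D = ρ x`, `E - m = ρ (1 + e - θ)` and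
`E + m = ρ h x²`; the linear inequalities then follow from `key_ineq` by completing the square. -/
lemma adm_plus
    (hdiff : ∀ ξ : ℝ, 0 < ξ → DifferentiableAt ℝ e ξ)
    (hpos : ∀ ξ : ℝ, 0 < ξ → 0 < e ξ)
    (hineq : ∀ ξ : ℝ, 0 < ξ → ξ / (e ξ + 1) < deriv e ξ)
    {ρ v θ : ℝ} (hρ : 0 < ρ) (hθ : 0 < θ) (hv : |v| < 1)
    (hS : σ ≤ -Real.log ρ + Zfun e θ) :
    Adm e σ (U1 e ρ v θ + F1s e ρ v θ) 1 1 := by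
  have hγ := gam1_pos hv
  have hγ2 := gam1_sq hv
  have hv1 : 0 < 1 + v := by linarith [(abs_lt.1 hv).1]
  have hh := hfun_pos hpos hθ
  have hc := lt_one_add_e hdiff hpos hineq hθ
  set x := gam1 v * (1 + v) with hx
  have hx0 : 0 < x := mul_pos hγ hv1
  set X := U1 e ρ v θ + F1s e ρ v θ with hX
  have hD : X.1 = ρ * x := by simp only [hX, U1, F1s, Prod.fst_add]; ring
  have hQ : X.2.2 - X.2.1 = ρ * (1 + e θ - θ) := by
    have : X.2.2 - X.2.1 = ρ * hfun e θ * (gam1 v ^ 2 * (1 - v ^ 2)) - 2 * (ρ * θ) := by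
      simp only [hX, U1, F1s, Prod.fst_add, Prod.snd_add]; ring
    rw [this, hγ2]; unfold hfun; ring
  have hP : X.2.2 + X.2.1 = ρ * hfun e θ * x ^ 2 := by
    simp only [hX, U1, F1s, Prod.fst_add, Prod.snd_add, hx]; ring
  have hP0 : 0 < ρ * hfun e θ * x ^ 2 := by positivity
  have hQ0 : 0 < ρ * (1 + e θ - θ) := mul_pos hρ (by linarith)
  refine ⟨by rw [hD]; positivity, by linarith, ?_, ?_⟩
  · filter_upwards [eventually_h_sq hdiff hpos hineq hθ] with η h1
    have h2 : X.2.2 ^ 2 - X.2.1 ^ 2 = (ρ * x) ^ 2 * ((1 + e θ) ^ 2 - θ ^ 2) := by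
      have : X.2.2 ^ 2 - X.2.1 ^ 2 = (X.2.2 - X.2.1) * (X.2.2 + X.2.1) := by ring
      rw [this, hQ, hP]; unfold hfun; ring
    have h3 := mul_le_mul_of_nonneg_left h1 (sq_nonneg (ρ * x))
    rw [hD]
    nlinarith
  · intro y τ hy hτ
    rw [hQ, hP, hD]
    have hk := key_ineq hdiff hpos hineq hθ hτ
    set R := Real.exp (Zfun e τ - Zfun e θ) with hR
    have hp : ρ * R ≤ Real.exp (Zfun e τ - σ) := by
      have h1 : ρ ≤ Real.exp (Zfun e θ - σ) := by
        rw [← Real.log_le_iff_le_exp hρ]; linarith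
      calc ρ * R ≤ Real.exp (Zfun e θ - σ) * R := by gcongr
        _ = Real.exp (Zfun e τ - σ) := by rw [hR, ← Real.exp_add]; ring_nf
    have hp2 : τ * (ρ * R) * y ^ 2 ≤ τ * Real.exp (Zfun e τ - σ) * y ^ 2 := by gcongr
    have hsq : 0 ≤ (1 + e θ - θ + 2 * (τ * R)) * y ^ 2 + hfun e θ * x ^ 2
        - 2 * hfun e τ * (x * y) := by
      have h4 : hfun e τ ^ 2 ≤ hfun e θ * (1 + e θ - θ + 2 * (τ * R)) := by
        have : (1 + e θ) ^ 2 - θ ^ 2 = hfun e θ * (1 + e θ - θ) := by unfold hfun; ring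
        linarith
      have h5 := mul_le_mul_of_nonneg_right h4 (sq_nonneg y)
      refine nonneg_of_mul_nonneg_right (a := hfun e θ) ?_ hh
      nlinarith [sq_nonneg (hfun e θ * x - hfun e τ * y)]
    have h6 := mul_nonneg hρ.le hsq
    nlinarith

lemma adm_minus
    (hdiff : ∀ ξ : ℝ, 0 < ξ → DifferentiableAt ℝ e ξ)
    (hpos : ∀ ξ : ℝ, 0 < ξ → 0 < e ξ)
    (hineq : ∀ ξ : ℝ, 0 < ξ → ξ / (e ξ + 1) < deriv e ξ)
    {ρ v θ : ℝ} (hρ : 0 < ρ) (hθ : 0 < θ) (hv : |v| < 1)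
    (hS : σ ≤ -Real.log ρ + Zfun e θ) :
    Adm e σ (U1 e ρ v θ - F1s e ρ v θ) 1 (-1) := by
  have h := (adm_plus hdiff hpos hineq hρ hθ (v := -v) (by simpa using hv) hS).reflect
  have hg : gam1 (-v) = gam1 v := by simp [gam1]
  convert h using 1
  simp only [U1, F1s, hg, Prod.mk_add_mk, Prod.mk_sub_mk, Prod.mk.injEq]
  refine ⟨by ring, by ring, by ring⟩

lemma adm_state
    (hdiff : ∀ ξ : ℝ, 0 < ξ → DifferentiableAt ℝ e ξ)
    (hpos : ∀ ξ : ℝ, 0 < ξ → 0 < e ξ)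
    (hineq : ∀ ξ : ℝ, 0 < ξ → ξ / (e ξ + 1) < deriv e ξ)
    {ρ v θ : ℝ} (hρ : 0 < ρ) (hθ : 0 < θ) (hv : |v| < 1)
    (hS : σ ≤ -Real.log ρ + Zfun e θ) : Adm e σ (U1 e ρ v θ) 1 0 := by
  have h := ((adm_plus hdiff hpos hineq hρ hθ hv hS).add
    (adm_minus hdiff hpos hineq hρ hθ hv hS)).smul (c := 1 / 2) (by norm_num)
  convert h using 1
  · module
  · norm_num
  · norm_num

/-! ### Recovery of primitive variables -/

/-- Eliminating `ρ` and `v` leaves the scalar equation `S - D² h θ / S = E` in `θ`, with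
`S = √((h D)² + m²)`, which is `ρ h γ²` for the state sought. -/
lemma recover
    (hdiff : ∀ ξ : ℝ, 0 < ξ → DifferentiableAt ℝ e ξ)
    (hpos : ∀ ξ : ℝ, 0 < ξ → 0 < e ξ)
    (hineq : ∀ ξ : ℝ, 0 < ξ → ξ / (e ξ + 1) < deriv e ξ)
    {D m E η : ℝ} (hD : 0 < D) (hE : 0 ≤ E) (hη : 0 < η)
    (hcone : (hfun e η * D) ^ 2 + m ^ 2 ≤ E ^ 2) :
    ∃ ρ v θ : ℝ, 0 < ρ ∧ 0 < θ ∧ |v| < 1 ∧ (D, m, E) = U1 e ρ v θ := by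
  set S : ℝ → ℝ := fun θ => Real.sqrt ((hfun e θ * D) ^ 2 + m ^ 2) with hSdef
  set f : ℝ → ℝ := fun θ => S θ - D ^ 2 * hfun e θ * θ / S θ with hf
  have hSpos : ∀ θ, 0 < θ → 0 < S θ := by
    intro θ hθ
    have := hfun_pos hpos hθ
    exact Real.sqrt_pos.2 (by positivity)
  have hSge : ∀ θ, 0 < θ → hfun e θ * D ≤ S θ := by
    intro θ hθ
    apply Real.le_sqrt_of_sq_le
    nlinarith [sq_nonneg m]
  have hcont : ∀ θ, 0 < θ → ContinuousAt f θ := by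
    intro θ hθ
    have h0 := (hdiff θ hθ).continuousAt
    have h1 : ContinuousAt (hfun e) θ := by
      unfold hfun; fun_prop
    have h2 : ContinuousAt S θ := by
      simp only [hSdef]; fun_prop
    exact h2.sub (((continuousAt_const.mul h1).mul continuousAt_id).div h2 (hSpos θ hθ).ne')
  set M := max η (E / D) with hM
  have hM0 : 0 < M := hη.trans_le (le_max_left _ _)
  have hlow : f η ≤ E := by
    have h1 : S η ≤ E := Real.sqrt_le_iff.2 ⟨hE, hcone⟩
    have h2 := hfun_pos hpos hη
    have h3 := hSpos η hη
    have : 0 ≤ D ^ 2 * hfun e η * η / S η := by positivity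
    simp only [hf]; linarith
  have hhigh : E ≤ f M := by
    have h2 := hfun_pos hpos hM0
    have h3 := hSpos M hM0
    have h4 := hSge M hM0
    have h5 : D ^ 2 * hfun e M * M / S M ≤ D * M := by
      rw [div_le_iff₀ h3]
      have := mul_le_mul_of_nonneg_left h4 (mul_pos hD hM0).le
      linarith
    have h6 : E ≤ M * D := by
      rw [← div_le_iff₀ hD]; exact le_max_right _ _
    have h7 := mul_lt_mul_of_pos_right (lt_one_add_e hdiff hpos hineq hM0) hD
    have h8 : hfun e M * D = (1 + e M) * D + D * M := by unfold hfun; ring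
    simp only [hf]; linarith
  obtain ⟨θ, hθm, hθE⟩ := intermediate_value_Icc (le_max_left η (E / D))
    (fun x hx => (hcont x (hη.trans_le hx.1)).continuousWithinAt) ⟨hlow, hhigh⟩
  have hθ : 0 < θ := hη.trans_le hθm.1
  have hh := hfun_pos hpos hθ
  have hs := hSpos θ hθ
  have hs2 : S θ ^ 2 = (hfun e θ * D) ^ 2 + m ^ 2 := Real.sq_sqrt (by positivity)
  have h1v : 1 - (m / S θ) ^ 2 = (hfun e θ * D / S θ) ^ 2 := by
    field_simp; linarith
  have hg : gam1 (m / S θ) = S θ / (hfun e θ * D) := by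
    unfold gam1
    rw [h1v, Real.sqrt_sq (by positivity), one_div_div]
  refine ⟨D ^ 2 * hfun e θ / S θ, m / S θ, θ, by positivity, hθ, ?_, ?_⟩
  · rw [← sq_lt_one_iff_abs_lt_one]
    have : 0 < (hfun e θ * D / S θ) ^ 2 := by positivity
    linarith
  · simp only [U1, hg, Prod.mk.injEq]
    refine ⟨by field_simp, by field_simp, ?_⟩
    rw [← hθE]
    simp only [hf]
    field_simp

/-- Evaluating the linear inequality at the temperature and velocity of the recovered state
gives its entropy bound. -/
lemma mem_Omega_of_adm
    (hdiff : ∀ ξ : ℝ, 0 < ξ → DifferentiableAt ℝ e ξ)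
    (hpos : ∀ ξ : ℝ, 0 < ξ → 0 < e ξ)
    (hineq : ∀ ξ : ℝ, 0 < ξ → ξ / (e ξ + 1) < deriv e ξ)
    {X : ℝ × ℝ × ℝ} (hX : Adm e σ X 1 0) (hD : 0 < X.1) :
    X ∈ Omega1 e σ := by
  obtain ⟨-, hE, hev, hlin⟩ := hX
  obtain ⟨η, h1, h2⟩ := (hev.and self_mem_nhdsWithin).exists
  obtain ⟨ρ, v, θ, hρ, hθ, hv, hU⟩ := recover hdiff hpos hineq hD hE h2 h1
  refine ⟨ρ, v, θ, hρ, hθ, hv, ?_, hU⟩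
  have hγ := gam1_pos hv
  have hγ2 := gam1_sq hv
  have hv1 : 0 < 1 + v := by linarith [(abs_lt.1 hv).1]
  have h3 := hlin (gam1 v * (1 + v)) θ (mul_pos hγ hv1) hθ
  have hX : X = U1 e ρ v θ := hU
  rw [hX] at h3
  simp only [U1] at h3
  set G := gam1 v with hG
  set q := Real.exp (Zfun e θ - σ) with hq
  have h4 : 0 ≤ (2 * G ^ 2 * (1 + v) * θ) * (q - ρ) := by
    have hy2 : (G * (1 + v)) ^ 2 + 1 = 2 * G ^ 2 * (1 + v) := by linear_combination -hγ2
    have hid : (ρ * hfun e θ * G ^ 2 - ρ * θ - ρ * hfun e θ * G ^ 2 * v) * (G * (1 + v)) ^ 2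
        + (ρ * hfun e θ * G ^ 2 - ρ * θ + ρ * hfun e θ * G ^ 2 * v)
        - 2 * (G * (1 + v)) * hfun e θ * (ρ * G)
        + 1 * (θ * q) * ((G * (1 + v)) ^ 2 + 1) + 0 * (θ * q) * ((G * (1 + v)) ^ 2 - 1)
        = (2 * G ^ 2 * (1 + v) * θ) * (q - ρ) := by
      linear_combination (ρ * hfun e θ * G ^ 2 * (1 + v)) * hγ2 + (θ * q - ρ * θ) * hy2
    linarith
  have h5 : 0 ≤ q - ρ := nonneg_of_mul_nonneg_right h4 (by positivity)
  have h6 : Real.log ρ ≤ Zfun e θ - σ := (Real.log_le_iff_le_exp hρ).2 (by linarith)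
  linarith

end States

/-! ### The scheme -/

/-- high-order 1D scheme: the updated cell average stays in `Ω_σ`.
Let `e` be a Synge-type EOS, `d = 1`, `σ ∈ ℝ`, `L ≥ 2`, and positive quadrature
weights `ω_1,…,ω_L` summing to 1. Given admissible primitive states at the `L`
quadrature nodes of a cell (with entropy at least `σ`), and admissible states `a`, `b`
(the right endpoint value of the left neighbor and the left endpoint value of the right
neighbor, also with entropy at least `σ`), and `0 < λ ≤ min(ω_1, ω_L)`, the
Lax–Friedrichs update of the cell average `Ū = Σ_ℓ ω_ℓ Ũ^ℓ` stays in `Ω_σ`. -/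
theorem minimum_entropy_stmt13 (e : ℝ → ℝ)
    (hdiff : ∀ ξ : ℝ, 0 < ξ → DifferentiableAt ℝ e ξ)
    (hpos : ∀ ξ : ℝ, 0 < ξ → 0 < e ξ)
    (hineq : ∀ ξ : ℝ, 0 < ξ → ξ / (e ξ + 1) < deriv e ξ)
    (σ : ℝ) (L : ℕ) (hL : 2 ≤ L)
    (ω : Fin L → ℝ) (hω : ∀ ℓ, 0 < ω ℓ) (hωsum : ∑ ℓ, ω ℓ = 1)
    (ρ v θ : Fin L → ℝ)
    (hρ : ∀ ℓ, 0 < ρ ℓ) (hθ : ∀ ℓ, 0 < θ ℓ) (hv : ∀ ℓ, |v ℓ| < 1)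
    (hS : ∀ ℓ, σ ≤ -Real.log (ρ ℓ) + Zfun e (θ ℓ))
    (ρa va θa : ℝ) (hρa : 0 < ρa) (hθa : 0 < θa) (hva : |va| < 1)
    (hSa : σ ≤ -Real.log ρa + Zfun e θa)
    (ρb vb θb : ℝ) (hρb : 0 < ρb) (hθb : 0 < θb) (hvb : |vb| < 1)
    (hSb : σ ≤ -Real.log ρb + Zfun e θb)
    (lam : ℝ) (hlam0 : 0 < lam)
    (hlamCFL : lam ≤ min (ω ⟨0, by omega⟩) (ω ⟨L - 1, by omega⟩)) :
    (∑ ℓ, ω ℓ • U1 e (ρ ℓ) (v ℓ) (θ ℓ)) -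
        lam • (LFflux (U1 e (ρ ⟨L - 1, by omega⟩) (v ⟨L - 1, by omega⟩) (θ ⟨L - 1, by omega⟩))
                 (U1 e ρb vb θb)
                 (F1s e (ρ ⟨L - 1, by omega⟩) (v ⟨L - 1, by omega⟩) (θ ⟨L - 1, by omega⟩))
                 (F1s e ρb vb θb) -
               LFflux (U1 e ρa va θa)
                 (U1 e (ρ ⟨0, by omega⟩) (v ⟨0, by omega⟩) (θ ⟨0, by omega⟩))
                 (F1s e ρa va θa)
                 (F1s e (ρ ⟨0, by omega⟩) (v ⟨0, by omega⟩) (θ ⟨0, by omega⟩)))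
      ∈ Omega1 e σ := by
  -- Convex splitting: remove weight `lam` from both endpoint states and recombine it with
  -- the fluxes.
  have hne : (⟨0, by omega⟩ : Fin L) ≠ ⟨L - 1, by omega⟩ := by
    simp only [ne_eq, Fin.mk.injEq]; omega
  obtain ⟨hl0, hl1⟩ := le_min_iff.1 hlamCFL
  set i : Fin L := ⟨0, by omega⟩ with hi
  set j : Fin L := ⟨L - 1, by omega⟩ with hj
  set W : Fin L → ℝ := fun ℓ => ω ℓ - (if ℓ = i then lam else 0) - (if ℓ = j then lam else 0)
    with hW
  have hW0 : ∀ ℓ, 0 ≤ W ℓ := by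
    intro ℓ
    have := (hω ℓ).le
    simp only [hW]
    by_cases h1 : ℓ = i
    · subst h1
      simp only [if_true, if_neg hne]; linarith
    · by_cases h2 : ℓ = j
      · subst h2
        simp only [if_true, if_neg h1]; linarith
      · simp only [if_neg h1, if_neg h2]; linarith
  have hWsum : ∑ ℓ, W ℓ = 1 - 2 * lam := by
    simp only [hW, Finset.sum_sub_distrib, hωsum, Finset.sum_ite_eq', Finset.mem_univ, if_true]
    ring
  have hWU : ∑ ℓ, W ℓ • U1 e (ρ ℓ) (v ℓ) (θ ℓ) = ∑ ℓ, ω ℓ • U1 e (ρ ℓ) (v ℓ) (θ ℓ)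
      - lam • U1 e (ρ i) (v i) (θ i) - lam • U1 e (ρ j) (v j) (θ j) := by
    simp only [hW, sub_smul, ite_smul, zero_smul, Finset.sum_sub_distrib, Finset.sum_ite_eq',
      Finset.mem_univ, if_true]
  have hA1 := Adm.sum Finset.univ _ _ _ fun ℓ _ =>
    (adm_state hdiff hpos hineq (hρ ℓ) (hθ ℓ) (hv ℓ) (hS ℓ)).smul (hW0 ℓ)
  simp only [mul_one, mul_zero, Finset.sum_const_zero, hWU, hWsum] at hA1
  have hl2 : 0 ≤ lam / 2 := by linarith
  have hi' := adm_plus hdiff hpos hineq (hρ i) (hθ i) (hv i) (hS i)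
  have hj' := adm_minus hdiff hpos hineq (hρ j) (hθ j) (hv j) (hS j)
  have ha' := adm_plus hdiff hpos hineq hρa hθa hva hSa
  have hb' := adm_minus hdiff hpos hineq hρb hθb hvb hSb
  have hrest := ((hA1.add (hj'.smul hl2)).add (ha'.smul hl2)).add (hb'.smul hl2)
  have hall := hrest.add (hi'.smul hl2)
  have hDi : 0 < (U1 e (ρ i) (v i) (θ i) + F1s e (ρ i) (v i) (θ i)).1 := by
    have h1 : 0 < ρ i * gam1 (v i) := mul_pos (hρ i) (gam1_pos (hv i))
    have h2 := (abs_lt.1 (hv i)).1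
    simp only [U1, F1s, Prod.fst_add]
    nlinarith
  have hDpos := add_pos_of_nonneg_of_pos hrest.1 (mul_pos (half_pos hlam0) hDi)
  have hmem := mem_Omega_of_adm hdiff hpos hineq (σ := σ)
    (by convert hall using 1 <;> ring) hDpos
  convert hmem using 1
  simp only [LFflux]
  module
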